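/- Let p ∈ [0,1]^S and P = P_p. For every k ∈ {1,…,m} and every (v_1,…,v_{k−1}) ∈ ℝ^{k−1} such that Pr_{X∼P}[F(X,p)_j = v_j for all j < k] > 0, the conditional expectation satisfies E_{X∼P}[F(X,p)_k | F(X,p)_j = v_j for all j < k] = p_k. -/

import Mathlib

open scoped BigOperators Classical

/-- The index set `S` of parental configurations: pairs `(i, a)` where
`a : Parents i → Bool`. -/
abbrev BNIdx (d : ℕ) (Par : Fin d → Finset (Fin d)) :=
  (i : Fin d) × ({j : Fin d // j ∈ Par i} → Bool)

/-- The restriction of `x ∈ {0,1}^d` to the parents of node `i`. -/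
def cfgOf {d : ℕ} (Par : Fin d → Finset (Fin d)) (x : Fin d → Bool) (i : Fin d) :
    {j : Fin d // j ∈ Par i} → Bool :=
  fun j => x j.1

/-- The Bayesian network `P_p` with conditional probability table `p`. -/
noncomputable def bnDist {d : ℕ} (Par : Fin d → Finset (Fin d))
    (p : BNIdx d Par → ℝ) (x : Fin d → Bool) : ℝ :=
  ∏ i : Fin d, if x i then p ⟨i, cfgOf Par x i⟩ else 1 - p ⟨i, cfgOf Par x i⟩

/-- `Pr_R[Π_k]`, the probability of the parental configuration `k` under `R`. -/
noncomputable def prCfg {d : ℕ} (Par : Fin d → Finset (Fin d))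
    (R : (Fin d → Bool) → ℝ) (k : BNIdx d Par) : ℝ :=
  ∑ x : Fin d → Bool, if cfgOf Par x k.1 = k.2 then R x else 0

/-- Probability of an event `A` under `R`. -/
noncomputable def prEvent {d : ℕ} (R : (Fin d → Bool) → ℝ)
    (A : (Fin d → Bool) → Prop) : ℝ :=
  ∑ x : Fin d → Bool, if A x then R x else 0

/-- Expectation `E_{X ∼ R}[g(X)]`. -/
noncomputable def expec {d : ℕ} (R : (Fin d → Bool) → ℝ)
    (g : (Fin d → Bool) → ℝ) : ℝ :=
  ∑ x : Fin d → Bool, R x * g x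

/-- The vector `F(x, q) ∈ ℝ^S`. -/
noncomputable def Fvec {d : ℕ} (Par : Fin d → Finset (Fin d))
    (x : Fin d → Bool) (q : BNIdx d Par → ℝ) (k : BNIdx d Par) : ℝ :=
  if cfgOf Par x k.1 = k.2 then (if x k.1 then 1 else 0) else q k

/-- `R` is a probability distribution on the finite set `D`. -/
def IsProbDist {D : Type*} [Fintype D] (R : D → ℝ) : Prop :=
  (∀ x, 0 ≤ R x) ∧ ∑ x, R x = 1

/-- Total variation distance. -/
noncomputable def dTV {D : Type*} [Fintype D] (A B : D → ℝ) : ℝ :=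
  (∑ x, |A x - B x|) / 2

/-- Squared Hellinger distance `d_H(A,B)² = 1 - Σ √(A(x)·B(x))`. -/
noncomputable def hellingerSq {D : Type*} [Fintype D] (A B : D → ℝ) : ℝ :=
  1 - ∑ x, Real.sqrt (A x * B x)

/-- Euclidean norm on `ℝ^ι`. -/
noncomputable def enorm2 {ι : Type*} [Fintype ι] (v : ι → ℝ) : ℝ :=
  Real.sqrt (∑ k, v k ^ 2)

/-- The second-moment matrix `M_R` (relative to `q`). -/
noncomputable def covM {d : ℕ} (Par : Fin d → Finset (Fin d))
    (R : (Fin d → Bool) → ℝ) (q : BNIdx d Par → ℝ) :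
    Matrix (BNIdx d Par) (BNIdx d Par) ℝ :=
  fun k l => expec R (fun x => (Fvec Par x q k - q k) * (Fvec Par x q l - q l))

/-- `M_R^0`: the matrix `M_R` with zeroed diagonal. -/
noncomputable def covM0 {d : ℕ} (Par : Fin d → Finset (Fin d))
    (R : (Fin d → Bool) → ℝ) (q : BNIdx d Par → ℝ) :
    Matrix (BNIdx d Par) (BNIdx d Par) ℝ :=
  fun k l => if k = l then 0 else covM Par R q k l

/-- Spectral norm (ℓ²-operator norm) of a real matrix. -/
noncomputable def specNorm {ι : Type*} [Fintype ι] [DecidableEq ι]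
    (M : Matrix ι ι ℝ) : ℝ :=
  ‖Matrix.toEuclideanCLM (𝕜 := ℝ) M‖


/-- Lexicographic order on parental configurations of a fixed node
(`Bool` ordered by `false < true`, coordinates compared in increasing order). -/
def cfgLt {d : ℕ} (Par : Fin d → Finset (Fin d)) (i : Fin d)
    (a b : {j : Fin d // j ∈ Par i} → Bool) : Prop :=
  ∃ j, (∀ j', j' < j → a j' = b j') ∧ a j < b j

/-- The lexicographic order on the index set `S`: first compare the node,
then the configuration. -/
def idxLt {d : ℕ} (Par : Fin d → Finset (Fin d)) (k l : BNIdx d Par) : Prop :=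
  k.1 < l.1 ∨ ∃ h : k.1 = l.1, cfgLt Par l.1 (h ▸ k.2) l.2

/-!
Write `Xᵢ - p_{i,a(i,X)}` for the centred value of node `i`. It has mean zero given the nodes before
`i`: in the sum defining the expectation of `g(X₁, …, Xᵢ₋₁) (Xᵢ - p_{i,a(i,X)})`, the nodes after
`i` sum out one at a time, the largest first, because each conditional weight sums to one and the
remaining factors do not involve that node; the sum over `xᵢ` then vanishes.

With `k = (i, a)`, the entry `F(X, p)_k - p_k` is this centred value on the event `Π_k` and zero off
it. On `Π_k` the entries of `F(X, p)` at other configurations of node `i` are constants, so an event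
fixing entries of `F(X, p)` other than the `k`-th, at nodes up to `i`, becomes after intersection
with `Π_k` an event about the nodes before `i`, and the identity applies with `g` its indicator.
-/

section SequentialWeights

open Function Set

variable {ι : Type*} {α : ι → Type*}

theorem apply_update_of_dependsOn [DecidableEq ι] {β : Type*} {f : (∀ i, α i) → β} {s : Set ι}
    (hf : DependsOn f s) {m : ι} (hm : m ∉ s) (x : ∀ i, α i) (b : α m) :
    f (update x m b) = f x :=
  hf fun _ hi => update_of_ne (ne_of_mem_of_not_mem hi hm) _ _

variable [∀ i, Fintype (α i)]

theorem sum_sum_update [Fintype ι] [DecidableEq ι] {M : Type*} [AddCommMonoid M]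
    (F : (∀ i, α i) → M) (m : ι) :
    ∑ x, ∑ b, F (update x m b) = Fintype.card (α m) • ∑ x, F x := by
  have swap_involutive : Involutive fun z : (∀ i, α i) × α m => (update z.1 m z.2, z.1 m) :=
    fun z => by simp
  calc ∑ x, ∑ b, F (update x m b)
      = ∑ z : (∀ i, α i) × α m, F (update z.1 m z.2) :=
        (Fintype.sum_prod_type' fun x b => F (update x m b)).symm
    _ = ∑ z : (∀ i, α i) × α m, F z.1 := swap_involutive.bijective.sum_comp fun z => F z.1
    _ = ∑ x, ∑ _b : α m, F x := Fintype.sum_prod_type' fun x _ => F x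
    _ = Fintype.card (α m) • ∑ x, F x := by
      simp only [Finset.sum_const, Finset.card_univ, Finset.smul_sum]

theorem sum_eq_zero_of_sum_sum_update_eq_zero [Fintype ι] [DecidableEq ι] {M : Type*}
    [AddCommMonoid M] [IsAddTorsionFree M] {F : (∀ i, α i) → M} (m : ι)
    (h : ∑ x, ∑ b, F (update x m b) = 0) :
    ∑ x, F x = 0 := by
  rw [sum_sum_update] at h
  rcases isEmpty_or_nonempty (α m) with hm | hm
  · exact Fintype.sum_eq_zero _ fun x => hm.elim (x m)
  · exact (nsmul_eq_zero_iff_right Fintype.card_ne_zero).mp h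

variable [LinearOrder ι] {R : Type*} [CommSemiring R]

/-- A family of conditional weights `w i (x i ∣ x j, j < i)`, as in the chain rule for a joint
distribution. The family is encoded by functions of the whole configuration, and the weights may
have any sign. -/
structure IsConditionalWeight (w : ι → (∀ i, α i) → R) : Prop where
  dependsOn : ∀ i, DependsOn (w i) (Iic i)
  sum_update : ∀ i x, ∑ b, w i (update x i b) = 1

namespace IsConditionalWeight

variable {w : ι → (∀ i, α i) → R}

theorem dependsOn_prod (hw : IsConditionalWeight w) {s : Finset ι} {m : ι} (hs : ∀ j ∈ s, j < m) :
    DependsOn (fun x => ∏ j ∈ s, w j x) (Iio m) :=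
  fun _ _ hxy => Finset.prod_congr rfl fun j hj =>
    hw.dependsOn j fun l (hl : l ≤ j) => hxy l (hl.trans_lt (hs j hj))

theorem sum_prod_mul_eq_zero [Fintype ι] [IsAddTorsionFree R] (hw : IsConditionalWeight w)
    {i : ι} {s : Finset ι} (his : i ∈ s) {h : (∀ i, α i) → R} (hdep : DependsOn h (Iic i))
    (hsum : ∀ x, ∑ b, w i (update x i b) * h (update x i b) = 0) :
    ∑ x, (∏ j ∈ s, w j x) * h x = 0 := by
  induction s using Finset.induction_on_max with
  | empty => simp at his
  | insert m t ht ih =>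
    have prod_update (x : ∀ i, α i) (b : α m) :
        ∏ j ∈ insert m t, w j (update x m b) = w m (update x m b) * ∏ j ∈ t, w j x := by
      rw [Finset.prod_insert fun hm => (ht m hm).false,
        apply_update_of_dependsOn (hw.dependsOn_prod ht) self_notMem_Iio x b]
    apply sum_eq_zero_of_sum_sum_update_eq_zero m
    simp only [prod_update]
    rcases Finset.mem_insert.mp his with rfl | hit
    · refine Fintype.sum_eq_zero _ fun x => ?_
      simp only [mul_right_comm, ← Finset.sum_mul, hsum, zero_mul]
    · have h_update (x : ∀ i, α i) (b : α m) : h (update x m b) = h x :=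
        apply_update_of_dependsOn hdep (notMem_Iic.mpr (ht i hit)) x b
      simp only [h_update, mul_assoc, ← Finset.sum_mul, hw.sum_update, one_mul]
      exact ih hit

end IsConditionalWeight

end SequentialWeights

section BayesianNetwork

open Function Set

variable {d : ℕ} {Par : Fin d → Finset (Fin d)}

/-- The conditional probability, under the table `p`, that node `i` takes the value `x i` given
the values of its parents in `x`: the `i`-th factor of `bnDist`. -/
noncomputable def nodeWeight (Par : Fin d → Finset (Fin d)) (p : BNIdx d Par → ℝ) (i : Fin d)
    (x : Fin d → Bool) : ℝ :=
  if x i then p ⟨i, cfgOf Par x i⟩ else 1 - p ⟨i, cfgOf Par x i⟩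

theorem dependsOn_cfgOf (i : Fin d) : DependsOn (fun x => cfgOf Par x i) (Par i) :=
  fun _ _ hxy => funext fun j => hxy j j.2

theorem cfgOf_update_self {i : Fin d} (hi : i ∉ Par i) (x : Fin d → Bool) (b : Bool) :
    cfgOf Par (update x i b) i = cfgOf Par x i :=
  apply_update_of_dependsOn (dependsOn_cfgOf i) hi x b

theorem dependsOn_nodeWeight (p : BNIdx d Par → ℝ) (i : Fin d) :
    DependsOn (nodeWeight Par p i) (insert i (Par i : Set (Fin d))) := by
  intro x y hxy
  have hcfg : cfgOf Par x i = cfgOf Par y i :=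
    dependsOn_cfgOf i fun j hj => hxy j (mem_insert_of_mem i hj)
  simp only [nodeWeight, hcfg, hxy i (mem_insert i _)]

theorem dependsOn_Fvec (q : BNIdx d Par → ℝ) (k : BNIdx d Par) :
    DependsOn (fun x => Fvec Par x q k) (insert k.1 (Par k.1 : Set (Fin d))) := by
  intro x y hxy
  have hcfg : cfgOf Par x k.1 = cfgOf Par y k.1 :=
    dependsOn_cfgOf k.1 fun j hj => hxy j (mem_insert_of_mem k.1 hj)
  simp only [Fvec, hcfg, hxy k.1 (mem_insert k.1 _)]

theorem Fvec_of_cfgOf_ne {x : Fin d → Bool} {k : BNIdx d Par} (h : cfgOf Par x k.1 ≠ k.2)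
    (q : BNIdx d Par → ℝ) : Fvec Par x q k = q k :=
  if_neg h

theorem Fvec_sub_eq_ite (x : Fin d → Bool) (q : BNIdx d Par → ℝ) (k : BNIdx d Par) :
    Fvec Par x q k - q k =
      if cfgOf Par x k.1 = k.2 then (if x k.1 then 1 else 0) - q ⟨k.1, cfgOf Par x k.1⟩ else 0 := by
  unfold Fvec
  split_ifs with h <;> simp [h]

theorem ne_of_idxLt {k l : BNIdx d Par} (h : idxLt Par k l) : k ≠ l := by
  rintro rfl
  rcases h with h | ⟨_, _, _, h⟩ <;> exact h.false

theorem fst_le_of_idxLt {k l : BNIdx d Par} (h : idxLt Par k l) : k.1 ≤ l.1 :=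
  h.elim le_of_lt fun ⟨h, _⟩ => h.le

theorem insert_parents_subset_Iic {i : Fin d} (hi : ∀ j ∈ Par i, j < i) :
    insert i (Par i : Set (Fin d)) ⊆ Iic i :=
  insert_subset self_mem_Iic fun j hj => (hi j hj).le

theorem isConditionalWeight_nodeWeight (hpar : ∀ i, ∀ j ∈ Par i, j < i)
    (p : BNIdx d Par → ℝ) : IsConditionalWeight (nodeWeight Par p) where
  dependsOn i := (dependsOn_nodeWeight p i).mono (insert_parents_subset_Iic (hpar i))
  sum_update i x := by
    simp [nodeWeight, cfgOf_update_self fun hi => (hpar i i hi).false]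

theorem expec_mul_node_sub_cpt_eq_zero (hpar : ∀ i, ∀ j ∈ Par i, j < i)
    (p : BNIdx d Par → ℝ) {i : Fin d} {g : (Fin d → Bool) → ℝ} (hg : DependsOn g (Iio i)) :
    expec (bnDist Par p) (fun x => g x * ((if x i then 1 else 0) - p ⟨i, cfgOf Par x i⟩)) = 0 := by
  refine (isConditionalWeight_nodeWeight hpar p).sum_prod_mul_eq_zero (Finset.mem_univ i) ?_ ?_
  · intro x y hxy
    have hcfg : cfgOf Par x i = cfgOf Par y i :=
      dependsOn_cfgOf i fun j hj => hxy j (hpar i j hj).le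
    simp only [hg fun j hj => hxy j (Iio_subset_Iic_self hj), hxy i self_mem_Iic, hcfg]
  · intro x
    have cfgOf_update (b : Bool) : cfgOf Par (update x i b) i = cfgOf Par x i :=
      cfgOf_update_self (fun hi => (hpar i i hi).false) x b
    have g_update (b : Bool) : g (update x i b) = g x :=
      apply_update_of_dependsOn hg self_notMem_Iio x b
    simp only [g_update, nodeWeight, cfgOf_update, update_self, Fintype.sum_bool,
      if_true, Bool.false_eq_true, if_false]
    ring

theorem dependsOn_Fvec_past_and_cfgOf (hpar : ∀ i, ∀ j ∈ Par i, j < i)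
    (q v : BNIdx d Par → ℝ) {k : BNIdx d Par} {T : Set (BNIdx d Par)}
    (hT : ∀ k' ∈ T, k'.1 ≤ k.1 ∧ k' ≠ k) :
    DependsOn (fun x => (∀ k' ∈ T, Fvec Par x q k' = v k') ∧ cfgOf Par x k.1 = k.2)
      (Iio k.1) := by
  intro x y hxy
  have hcfg : cfgOf Par x k.1 = cfgOf Par y k.1 :=
    dependsOn_cfgOf k.1 fun j hj => hxy j (hpar _ j hj)
  have hF (hx : cfgOf Par x k.1 = k.2) (k') (hk' : k' ∈ T) : Fvec Par x q k' = Fvec Par y q k' := by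
    obtain ⟨hle, hne⟩ := hT k' hk'
    rcases hle.lt_or_eq with hlt | heq
    · exact dependsOn_Fvec q k' fun j hj =>
        hxy j ((insert_parents_subset_Iic (hpar k'.1) hj).trans_lt hlt)
    · obtain ⟨i, a⟩ := k
      obtain ⟨i', a'⟩ := k'
      obtain rfl : i' = i := heq
      have hcfg_ne : cfgOf Par x i' ≠ a' := fun h => hne (congrArg (Sigma.mk i') (h.symm.trans hx))
      rw [Fvec_of_cfgOf_ne hcfg_ne, Fvec_of_cfgOf_ne (hcfg ▸ hcfg_ne)]
  refine propext ?_
  simp only [← hcfg]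
  exact and_congr_left fun hx => forall₂_congr fun k' hk' => by rw [hF hx k' hk']

theorem expec_ite_past_Fvec_sub_eq_zero (hpar : ∀ i, ∀ j ∈ Par i, j < i)
    (p v : BNIdx d Par → ℝ) {k : BNIdx d Par} {T : Set (BNIdx d Par)}
    (hT : ∀ k' ∈ T, k'.1 ≤ k.1 ∧ k' ≠ k) :
    expec (bnDist Par p)
      (fun x => if ∀ k' ∈ T, Fvec Par x p k' = v k' then Fvec Par x p k - p k else 0) = 0 := by
  have hdep := dependsOn_Fvec_past_and_cfgOf hpar p v hT
  have hdep_ite : DependsOn (fun x => if (∀ k' ∈ T, Fvec Par x p k' = v k') ∧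
      cfgOf Par x k.1 = k.2 then (1 : ℝ) else 0) (Iio k.1) :=
    fun _ _ hxy => if_congr (hdep hxy).to_iff rfl rfl
  simpa only [Fvec_sub_eq_ite, ← ite_and, ite_mul, one_mul, zero_mul] using
    expec_mul_node_sub_cpt_eq_zero hpar p hdep_ite

theorem cond_mean_of_Fvec_given_past_general (hpar : ∀ i, ∀ j ∈ Par i, j < i)
    (p v : BNIdx d Par → ℝ) (k : BNIdx d Par) {T : Set (BNIdx d Par)}
    (hT : ∀ k' ∈ T, k'.1 ≤ k.1 ∧ k' ≠ k)
    (hne : prEvent (bnDist Par p) (fun x => ∀ k' ∈ T, Fvec Par x p k' = v k') ≠ 0) :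
    (∑ x, if ∀ k' ∈ T, Fvec Par x p k' = v k' then bnDist Par p x * Fvec Par x p k else 0) /
      prEvent (bnDist Par p) (fun x => ∀ k' ∈ T, Fvec Par x p k' = v k') = p k := by
  have hzero := expec_ite_past_Fvec_sub_eq_zero hpar p v hT
  rw [div_eq_iff hne, ← sub_eq_zero, prEvent, Finset.mul_sum, ← Finset.sum_sub_distrib]
  refine (Finset.sum_congr rfl fun x _ => ?_).trans hzero
  dsimp only
  split_ifs <;> ring

end BayesianNetwork

theorem cond_mean_of_Fvec_given_past
    (d : ℕ) (hd : 1 ≤ d) (Par : Fin d → Finset (Fin d))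
    (hpar : ∀ i : Fin d, ∀ j ∈ Par i, j < i)
    (p : BNIdx d Par → ℝ) (hp : ∀ k, p k ∈ Set.Icc (0:ℝ) 1)
    (k : BNIdx d Par) (v : BNIdx d Par → ℝ)
    (hpos : 0 < prEvent (bnDist Par p)
      (fun x => ∀ k' : BNIdx d Par, idxLt Par k' k → Fvec Par x p k' = v k')) :
    (∑ x : Fin d → Bool,
        if ∀ k' : BNIdx d Par, idxLt Par k' k → Fvec Par x p k' = v k' then
          bnDist Par p x * Fvec Par x p k
        else 0) /
      prEvent (bnDist Par p)
        (fun x => ∀ k' : BNIdx d Par, idxLt Par k' k → Fvec Par x p k' = v k')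
    = p k := by
  exact cond_mean_of_Fvec_given_past_general hpar p v k (T := {k' | idxLt Par k' k})
    (fun _ h => ⟨fst_le_of_idxLt h, ne_of_idxLt h⟩) hpos.ne'
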